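/- arXiv:2006.15355 — 2 statements merged into one kernel-verified Lean document; each statement's English description precedes it below -/
import Mathlib

section
/- Let A be an alphabet with at least two letters. Every finite joinless code Q ⊆ nA* has a finite complementary joinless code Q', i.e. a finite joinless code Q' ⊆ nA* such that Q ∪ Q' is a maximal joinless code and Q·nA* ∩ Q'·nA* = ∅; moreover Q' can be chosen with maxlen(Q') ≤ max(maxlen(Q), 0) whenever Q is nonempty, i.e. with maxlen(Q') = maxlen(Q) when Q is nonempty and not already maximal. -/
open Stream'

variable {A : Type*} {n : ℕ}

/-- The initial-factor order `u ≤_init v` on `n`-tuples of strings: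
`u i` is a prefix of `v i` for every coordinate `i`. -/
def initLE (u v : Fin n → List A) : Prop := ∀ i, u i <+: v i

/-- `w` is the join (least upper bound w.r.t. `initLE`) of `u` and `v`. -/
def IsJoin (u v w : Fin n → List A) : Prop :=
  initLE u w ∧ initLE v w ∧ ∀ z, initLE u z → initLE v z → initLE w z

/-- The join of `u` and `v` exists. -/
def JoinEx (u v : Fin n → List A) : Prop := ∃ w, IsJoin u v w

/-- The set join `X ∨ Y = {x ∨ y : x ∈ X, y ∈ Y, x ∨ y exists}`. -/
def setJoin (X Y : Set (Fin n → List A)) : Set (Fin n → List A) :=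
  {w | ∃ x ∈ X, ∃ y ∈ Y, IsJoin x y w}

/-- A joinless code: no two distinct elements have a join. -/
def Joinless (S : Set (Fin n → List A)) : Prop :=
  ∀ x ∈ S, ∀ y ∈ S, x ≠ y → ¬ JoinEx x y

/-- A maximal joinless code. -/
def MaxJoinless (S : Set (Fin n → List A)) : Prop :=
  Joinless S ∧ ∀ T : Set (Fin n → List A), Joinless T → S ⊆ T → S = T

/-- Coordinatewise concatenation in `nA*`. -/
def cat (x v : Fin n → List A) : Fin n → List A := fun i => x i ++ v i

/-- The right ideal `S·nA*` generated by `S`. -/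
def rIdeal (S : Set (Fin n → List A)) : Set (Fin n → List A) :=
  {w | ∃ s ∈ S, ∃ v, w = cat s v}

/-- Coordinatewise concatenation of a tuple of finite strings
with a tuple of right-infinite words. -/
def catOmega (x : Fin n → List A) (w : Fin n → Stream' A) : Fin n → Stream' A :=
  fun i => x i ++ₛ w i

/-- `S·nA^ω`. -/
def omegaIdeal (S : Set (Fin n → List A)) : Set (Fin n → Stream' A) :=
  {w | ∃ s ∈ S, ∃ u, w = catOmega s u}

/-- `P ≡_fin Q`: the symmetric difference of the generated right ideals is finite. -/
def equivFin (P Q : Set (Fin n → List A)) : Prop :=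
  (symmDiff (rIdeal P) (rIdeal Q)).Finite

/-- `maxlen(S)`: the maximum coordinate length over a (finite nonempty) set. -/
noncomputable def maxlen (S : Set (Fin n → List A)) : ℕ :=
  sSup {m | ∃ x ∈ S, ∃ i, (x i).length = m}


theorem joinEx_of_ub {u v z : Fin n → List A} (hu : initLE u z) (hv : initLE v z) :
    JoinEx u v := by
  classical
  refine ⟨fun i => if (u i).length ≤ (v i).length then v i else u i, ?_, ?_, ?_⟩
  · intro i
    by_cases h : (u i).length ≤ (v i).length
    · simp only [h, if_true]
      exact List.prefix_of_prefix_length_le (hu i) (hv i) h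
    · simp only [h, if_false]
      exact List.prefix_refl _
  · intro i
    by_cases h : (u i).length ≤ (v i).length
    · simp only [h, if_true]
      exact List.prefix_refl _
    · simp only [h, if_false]
      exact List.prefix_of_prefix_length_le (hv i) (hu i) (by omega)
  · intro y h1 h2 i
    by_cases h : (u i).length ≤ (v i).length
    · simp only [h, if_true]
      exact h2 i
    · simp only [h, if_false]
      exact h1 i

theorem mem_rIdeal_of_le {S : Set (Fin n → List A)} {s w : Fin n → List A}
    (hs : s ∈ S) (h : initLE s w) : w ∈ rIdeal S := by
  choose v hv using h
  exact ⟨s, hs, v, funext fun i => (hv i).symm⟩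

theorem initLE_cat (s v : Fin n → List A) : initLE s (cat s v) :=
  fun i => List.prefix_append _ _

/-- Existence of a finite complementary joinless code (for `|A| ≥ 2`). -/
theorem stmt_10 [Fintype A] (hA : 2 ≤ Fintype.card A) (hn : 1 ≤ n)
    (Q : Set (Fin n → List A)) (hQf : Q.Finite) (hQ : Joinless Q) :
    ∃ Q' : Set (Fin n → List A),
      Q'.Finite ∧ Joinless Q' ∧ MaxJoinless (Q ∪ Q') ∧
      rIdeal Q ∩ rIdeal Q' = ∅ ∧
      (Q.Nonempty → maxlen Q' ≤ maxlen Q) ∧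
      (Q.Nonempty → ¬ MaxJoinless Q → maxlen Q' = maxlen Q) := by
  classical
  have hne : Nonempty A := Fintype.card_pos_iff.mp (by omega)
  obtain ⟨a⟩ := hne
  have hbdd : BddAbove {m | ∃ x ∈ Q, ∃ i, (x i).length = m} := by
    have : {m | ∃ x ∈ Q, ∃ i, (x i).length = m}
        = ⋃ x ∈ Q, Set.range (fun i => (x i).length) := by
      ext m; simp
    rw [this]
    exact (hQf.biUnion fun x _ => Set.finite_range _).bddAbove
  have hlen : ∀ q ∈ Q, ∀ i, (q i).length ≤ maxlen Q := fun q hq i =>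
    le_csSup hbdd ⟨q, hq, i, rfl⟩
  generalize hL : maxlen Q = L at *
  let Q' : Set (Fin n → List A) := {w | (∀ i, (w i).length = L) ∧ w ∉ rIdeal Q}
  have hfin : Q'.Finite := by
    refine (Set.Finite.pi (fun _ : Fin n => List.finite_length_eq A L)).subset ?_
    intro w hw i _
    exact hw.1 i
  have hcross : ∀ q ∈ Q, ∀ q' ∈ Q', ∀ z, initLE q z → initLE q' z → False := by
    intro q hq q' hq' z h1 h2
    refine hq'.2 (mem_rIdeal_of_le hq fun i => ?_)
    exact List.prefix_of_prefix_length_le (h1 i) (h2 i) (by rw [hq'.1 i]; exact hlen q hq i)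
  have hJ' : Joinless Q' := by
    rintro x hx y hy hxy ⟨z, h1, h2, _⟩
    refine hxy (funext fun i => ?_)
    exact (List.prefix_of_prefix_length_le (h1 i) (h2 i)
      (by rw [hx.1 i, hy.1 i])).eq_of_length (by rw [hx.1 i, hy.1 i])
  have hmax : MaxJoinless (Q ∪ Q') := by
    constructor
    · rintro x (hx | hx) y (hy | hy) hxy hj
      · exact hQ x hx y hy hxy hj
      · obtain ⟨z, h1, h2, _⟩ := hj
        exact hcross x hx y hy z h1 h2
      · obtain ⟨z, h1, h2, _⟩ := hj
        exact hcross y hy x hx z h2 h1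
      · exact hJ' x hx y hy hxy hj
    · intro T hT hsub
      refine Set.Subset.antisymm hsub ?_
      intro t ht
      let z : Fin n → List A := fun i => t i ++ List.replicate L a
      let w : Fin n → List A := fun i => (z i).take L
      have htz : initLE t z := fun i => List.prefix_append _ _
      have hwz : initLE w z := fun i => List.take_prefix _ _
      have hs : ∃ s ∈ Q ∪ Q', initLE s z := by
        by_cases hw : w ∈ rIdeal Q
        · obtain ⟨s, hs, v, hv⟩ := hw
          refine ⟨s, Or.inl hs, fun i => ?_⟩
          have h := initLE_cat s v i
          rw [← hv] at h
          exact h.trans (hwz i)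
        · exact ⟨w, Or.inr ⟨fun i => by simp [w, z], hw⟩, hwz⟩
      obtain ⟨s, hs, hsz⟩ := hs
      by_cases hst : s = t
      · exact hst ▸ hs
      · exact absurd (joinEx_of_ub hsz htz) (hT s (hsub hs) t ht hst)
  have heq : Q'.Nonempty → maxlen Q' = L := by
    rintro ⟨x, hx⟩
    have : {m | ∃ x ∈ Q', ∃ i, (x i).length = m} = {L} := by
      ext m
      constructor
      · rintro ⟨y, hy, i, rfl⟩
        exact hy.1 i
      · rintro rfl
        exact ⟨x, hx, ⟨0, hn⟩, hx.1 _⟩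
    rw [maxlen, this, csSup_singleton]
  refine ⟨Q', hfin, hJ', hmax, ?_, ?_, ?_⟩
  · rw [Set.eq_empty_iff_forall_notMem]
    rintro w ⟨⟨q, hq, v, rfl⟩, ⟨q', hq', v', h⟩⟩
    exact hcross q hq q' hq' _ (initLE_cat q v) (h ▸ initLE_cat q' v')
  · intro _
    rcases Q'.eq_empty_or_nonempty with h | h
    · rw [h]; simp [maxlen]
    · exact (heq h).le
  · intro _ hnm
    rcases Q'.eq_empty_or_nonempty with h | h
    · rw [h, Set.union_empty] at hmax
      exact absurd hmax hnm
    · exact heq h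
end

section
/- Let f₁ and f₂ be right-ideal morphisms of nA* that are normal with finite joinless domain codes (i.e. for j = 1, 2: domC(f_j) is a finite joinless code, imC(f_j) is a finite joinless code, and f_j(domC(f_j)) = imC(f_j)). Then maxlen(f₂ ∘ f₁) ≤ maxlen(f₂) + maxlen(f₁), provided f₂ ∘ f₁ is not the empty function. -/
open Stream'

variable {A : Type*} {n : ℕ}

/-- A right-ideal morphism of `nA*`, as a partial function:
if `f x = y` then `f (xv) = yv` (in particular the domain is a right ideal). -/
def IsRIM (f : (Fin n → List A) →. (Fin n → List A)) : Prop :=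
  ∀ x y, y ∈ f x → ∀ v, cat y v ∈ f (cat x v)

/-- The domain code `domC f`: the `initLE`-minimal elements of `Dom f`
(the unique initial-factor code generating the right ideal `Dom f`). -/
def domC (f : (Fin n → List A) →. (Fin n → List A)) : Set (Fin n → List A) :=
  {x ∈ f.Dom | ∀ y ∈ f.Dom, initLE y x → y = x}

/-- The image code `imC f`: the `initLE`-minimal elements of `Im f`
(the unique initial-factor code generating the right ideal `Im f`). -/
def imC (f : (Fin n → List A) →. (Fin n → List A)) : Set (Fin n → List A) :=
  {y ∈ f.ran | ∀ z ∈ f.ran, initLE z y → z = y}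

/-- An initial-factor code: an antichain for the strict initial-factor order. -/
def InitCode (S : Set (Fin n → List A)) : Prop :=
  ∀ x ∈ S, ∀ y ∈ S, initLE x y → x = y

/-- `maxlen` of a right-ideal morphism: `maxlen(domC(f) ∪ f(domC(f)))`. -/
noncomputable def maxlenM (f : (Fin n → List A) →. (Fin n → List A)) : ℕ :=
  maxlen (domC f ∪ f.image (domC f))

theorem cat_of_initLE {p x : Fin n → List A} (h : initLE p x) : ∃ v, x = cat p v := by
  choose v hv using h
  exact ⟨v, funext fun i => (hv i).symm⟩

theorem exists_domC (f : (Fin n → List A) →. (Fin n → List A)) :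
    ∀ (k : ℕ) (x : Fin n → List A), x ∈ f.Dom → (∑ i, (x i).length) = k →
      ∃ p ∈ domC f, initLE p x := by
  intro k
  induction k using Nat.strong_induction_on with
  | _ k ih =>
    intro x hx hk
    by_cases hm : ∀ y ∈ f.Dom, initLE y x → y = x
    · exact ⟨x, ⟨hx, hm⟩, fun i => List.prefix_refl _⟩
    · push Not at hm
      obtain ⟨y, hy, hyx, hne⟩ := hm
      have hlt : (∑ i, (y i).length) < k := by
        rw [← hk]
        apply Finset.sum_lt_sum
        · intro i _
          exact (hyx i).length_le
        · by_contra hcon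
          push Not at hcon
          apply hne
          funext i
          exact (hyx i).eq_of_length_le (hcon i (Finset.mem_univ i))
      obtain ⟨p, hp, hpy⟩ := ih _ hlt y hy rfl
      exact ⟨p, hp, fun i => (hpy i).trans (hyx i)⟩

theorem le_maxlen {S : Set (Fin n → List A)} (hS : S.Finite) {x : Fin n → List A}
    (hx : x ∈ S) (i : Fin n) : (x i).length ≤ maxlen S := by
  refine le_csSup (s := {m | ∃ x ∈ S, ∃ i, (x i).length = m}) ?_ ⟨x, hx, i, rfl⟩
  have : {m | ∃ x ∈ S, ∃ i, (x i).length = m} =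
      ⋃ i : Fin n, (fun x : Fin n → List A => (x i).length) '' S := by
    ext m
    simp only [Set.mem_ofPred_eq, Set.mem_iUnion, Set.mem_image]
    constructor
    · rintro ⟨x, hx, i, h⟩
      exact ⟨i, x, hx, h⟩
    · rintro ⟨i, x, hx, h⟩
      exact ⟨x, hx, i, h⟩
  rw [this]
  exact (Set.finite_iUnion fun i => hS.image _).bddAbove

theorem drop_join {q d v : List A} (h : d <+: q ++ v) :
    d ++ q.drop d.length = q ++ d.drop q.length := by
  rcases le_total d.length q.length with hl | hl
  · have hp : d <+: q := List.prefix_of_prefix_length_le h (List.prefix_append _ _) hl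
    obtain ⟨t, rfl⟩ := hp
    simp
  · have hp : q <+: d := List.prefix_of_prefix_length_le (List.prefix_append _ _) h hl
    obtain ⟨t, rfl⟩ := hp
    simp

theorem comp_struct {f₁ f₂ : (Fin n → List A) →. (Fin n → List A)}
    (hf₁ : IsRIM f₁) (hf₂ : IsRIM f₂) {x z : Fin n → List A}
    (hx : x ∈ domC (f₂.comp f₁)) (hz : z ∈ (f₂.comp f₁) x) :
    ∃ p ∈ domC f₁, ∃ q ∈ f₁ p, ∃ d ∈ domC f₂, ∃ e ∈ f₂ d,
      x = cat p (fun i => (d i).drop (q i).length) ∧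
      z = cat e (fun i => (q i).drop (d i).length) := by
  obtain ⟨y, hy, hzy⟩ := Part.mem_bind_iff.1 hz
  obtain ⟨p, hp, hpx⟩ := exists_domC f₁ _ x (Part.dom_iff_mem.2 ⟨y, hy⟩) rfl
  obtain ⟨q, hq⟩ := Part.dom_iff_mem.1 hp.1
  obtain ⟨v, hv⟩ := cat_of_initLE hpx
  have hyq : y = cat q v := by
    apply Part.mem_unique hy
    rw [hv]
    exact hf₁ p q hq v
  obtain ⟨d, hd, hdy⟩ := exists_domC f₂ _ y (Part.dom_iff_mem.2 ⟨z, hzy⟩) rfl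
  obtain ⟨e, he⟩ := Part.dom_iff_mem.1 hd.1
  have hdq : ∀ i, d i <+: q i ++ v i := fun i => by
    have := hdy i
    rw [hyq] at this
    exact this
  have hcat : cat d (fun i => (q i).drop (d i).length) =
      cat q (fun i => (d i).drop (q i).length) := funext fun i => drop_join (hdq i)
  have h1 := hf₁ p q hq (fun i => (d i).drop (q i).length)
  have h2 := hf₂ d e he (fun i => (q i).drop (d i).length)
  rw [hcat] at h2
  have h3 : cat e (fun i => (q i).drop (d i).length) ∈
      (f₂.comp f₁) (cat p (fun i => (d i).drop (q i).length)) :=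
    Part.mem_bind_iff.2 ⟨_, h1, h2⟩
  have hxe : cat p (fun i => (d i).drop (q i).length) = x := by
    apply hx.2 _ (Part.dom_iff_mem.2 ⟨_, h3⟩)
    intro i
    rw [hv]
    apply (List.prefix_append_right_inj _).2
    have := (hdq i).drop (q i).length
    simpa using this
  refine ⟨p, hp, q, hq, d, hd, e, he, hxe.symm, ?_⟩
  rw [hxe] at h3
  exact Part.mem_unique hz h3

theorem finite_codes {f : (Fin n → List A) →. (Fin n → List A)} (hd : (domC f).Finite)
    (hi : (imC f).Finite) (hnorm : f.image (domC f) = imC f) :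
    (domC f ∪ f.image (domC f)).Finite := by
  rw [hnorm]
  exact hd.union hi

/-- Length formula: for normal right-ideal morphisms with finite joinless domain
and image codes, `maxlen(f₂ ∘ f₁) ≤ maxlen(f₂) + maxlen(f₁)`. -/
theorem stmt_17 [Fintype A] [Nonempty A] (hn : 1 ≤ n)
    (f₁ f₂ : (Fin n → List A) →. (Fin n → List A))
    (hf₁ : IsRIM f₁) (hf₂ : IsRIM f₂)
    (hd₁ : (domC f₁).Finite) (hdj₁ : Joinless (domC f₁))
    (hi₁ : (imC f₁).Finite) (hij₁ : Joinless (imC f₁))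
    (hnorm₁ : f₁.image (domC f₁) = imC f₁)
    (hd₂ : (domC f₂).Finite) (hdj₂ : Joinless (domC f₂))
    (hi₂ : (imC f₂).Finite) (hij₂ : Joinless (imC f₂))
    (hnorm₂ : f₂.image (domC f₂) = imC f₂)
    (hne : (f₂.comp f₁).Dom.Nonempty) :
    maxlenM (f₂.comp f₁) ≤ maxlenM f₂ + maxlenM f₁ := by
  have F₁ := finite_codes hd₁ hi₁ hnorm₁
  have F₂ := finite_codes hd₂ hi₂ hnorm₂
  apply csSup_le'
  rintro m ⟨w, hw, i, rfl⟩
  rcases hw with hw | ⟨x, hx, hz⟩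
  · obtain ⟨z, hz⟩ := Part.dom_iff_mem.1 hw.1
    obtain ⟨p, hp, q, hq, d, hd, e, he, hxe, -⟩ := comp_struct hf₁ hf₂ hw hz
    have a := le_maxlen F₁ (Or.inl hp) i
    have b := le_maxlen F₂ (Or.inl hd) i
    rw [hxe]
    simp only [cat, List.length_append, List.length_drop, maxlenM]
    omega
  · obtain ⟨p, hp, q, hq, d, hd, e, he, -, hze⟩ := comp_struct hf₁ hf₂ hx hz
    have a := le_maxlen F₁ (Or.inr ⟨p, hp, hq⟩) i
    have b := le_maxlen F₂ (Or.inr ⟨d, hd, he⟩) i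
    rw [hze]
    simp only [cat, List.length_append, List.length_drop, maxlenM]
    omega
end
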